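/- arXiv:2301.13440 — 2 statements merged into one kernel-verified Lean document; each statement's English description precedes it below -/
import Mathlib

section
/- Let Y be a finite group, X ≤ Y a subgroup of index 2, and θ ∈ Irr(X) with θ̄ ≠ θ and θ^y = θ̄ for some y ∈ Y∖X. Then the induced character θ^Y is a real-valued irreducible character of Y, and its Frobenius–Schur indicator satisfies ε(θ^Y) = (1/|X|) ∑_{s ∈ Y∖X} θ(s²). -/
open scoped BigOperators
attribute [local instance] Classical.propDecidable

noncomputable section

/-- `χ` is an irreducible complex character of the group `G`. -/
def IsIrrChar (G : Type) [Group G] (χ : G → ℂ) : Prop :=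
  ∃ V : FDRep ℂ G, CategoryTheory.Simple V ∧ χ = V.character

/-- Frobenius–Schur indicator of a class function. -/
def FS (G : Type) [Group G] [Fintype G] (χ : G → ℂ) : ℂ :=
  (∑ g : G, χ (g ^ 2)) / (Fintype.card G : ℂ)

/-- The character of `G` induced from a character of the subgroup `H`. -/
def indChar {G : Type} [Group G] [Fintype G] (H : Subgroup G) (θ : ↥H → ℂ) : G → ℂ :=
  fun g => (∑ s : G, if h : s * g * s⁻¹ ∈ H then θ ⟨s * g * s⁻¹, h⟩ else 0) / (Nat.card H : ℂ)

/-- The conjugate character `θ^g : n ↦ θ (g n g⁻¹)` of a character of a subgroup `H`. -/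
def conjChar {G : Type} [Group G] (H : Subgroup G) (θ : ↥H → ℂ) (g : G) : ↥H → ℂ :=
  fun n => if h : g * (n : G) * g⁻¹ ∈ H then θ ⟨g * (n : G) * g⁻¹, h⟩ else 0

/-- The complex conjugate character. -/
def starChar {α : Type} (θ : α → ℂ) : α → ℂ := fun a => (starRingEnd ℂ) (θ a)

/-!
By averaging, the class function `θ^Y` is the character of the coinduced representation: the
projection of `Y → V` onto the equivariant functions, followed by translation by `g`, has trace
`θ^Y(g)`. For a normal subgroup, Frobenius reciprocity turns the norm of `θ^Y` into a sum of the
inner products `⟨θ, θ^s⟩`, and these vanish outside `X` because `θ^s = θ^y = θ̄ ≠ θ` there. The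
same identity `θ^y = θ̄` makes `θ^Y` real. Finally `ε(θ^Y) = |X|⁻¹ ∑_{s ∈ Y} θ(s²)`, in which the
terms with `s ∈ X` add up to `|X| ε(θ)`. This is zero: `|X| ε(θ)` is the trace of the swap composed
with `∑ ρ(s) ⊗ ρ(s)`, which is a multiple of the projection onto the invariants of `V ⊗ V`, and the
dimension of these is `⟨θ, θ̄⟩ = 0`.
-/

section Trace

open scoped TensorProduct

variable {R M : Type*} [CommRing R] [AddCommGroup M] [Module R M] [Module.Free R M]
  [Module.Finite R M]

theorem trace_comm_comp_tensorProduct_map (f g : M →ₗ[R] M) :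
    LinearMap.trace R (M ⊗[R] M)
        ((TensorProduct.comm R M M).toLinearMap ∘ₗ TensorProduct.map f g) =
      LinearMap.trace R M (f ∘ₗ g) := by
  let b := Module.Free.chooseBasis R M
  rw [LinearMap.trace_eq_matrix_trace R (b.tensorProduct b), LinearMap.trace_eq_matrix_trace R b,
    LinearMap.toMatrix_comp b b b]
  simp only [Matrix.trace, Matrix.diag_apply, Matrix.mul_apply, LinearMap.toMatrix_apply,
    Fintype.sum_prod_type, Module.Basis.tensorProduct_apply, LinearMap.coe_comp,
    LinearEquiv.coe_coe, Function.comp_apply, TensorProduct.map_tmul, TensorProduct.comm_tmul,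
    Module.Basis.tensorProduct_repr_tmul_apply, smul_eq_mul]
  exact Finset.sum_comm

theorem trace_pi_eq_sum_trace {ι : Type*} [Fintype ι] [DecidableEq ι]
    (f : (ι → M) →ₗ[R] (ι → M)) :
    LinearMap.trace R (ι → M) f =
      ∑ i, LinearMap.trace R M (LinearMap.proj i ∘ₗ f ∘ₗ LinearMap.single R (fun _ ↦ M) i) := by
  have decompose : f = ∑ i, (f ∘ₗ LinearMap.single R (fun _ ↦ M) i) ∘ₗ LinearMap.proj i := by
    refine LinearMap.ext fun v ↦ ?_
    simp only [LinearMap.sum_apply, LinearMap.comp_apply, LinearMap.proj_apply,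
      LinearMap.coe_single, ← map_sum, Finset.univ_sum_single]
  conv_lhs => rw [decompose]
  rw [map_sum]
  exact Finset.sum_congr rfl fun i _ ↦ LinearMap.trace_comp_comm' _ _

end Trace

section Unitarizable

open scoped ComplexOrder Matrix

variable {𝕜 n : Type*} [RCLike 𝕜] [Fintype n] [DecidableEq n]

theorem exists_posDef_conjTranspose_mul_mul_eq {G : Type*} [Group G] [Finite G]
    (A : G →* Matrix n n 𝕜) :
    ∃ H : Matrix n n 𝕜, H.PosDef ∧ ∀ g, (A g)ᴴ * H * A g = H := by
  have := Fintype.ofFinite G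
  refine ⟨∑ g, (A g)ᴴ * A g, ?_, fun x ↦ ?_⟩
  · rw [← Finset.add_sum_erase _ _ (Finset.mem_univ (1 : G)), map_one, Matrix.conjTranspose_one,
      Matrix.one_mul]
    exact Matrix.PosDef.one.add_posSemidef
      (Matrix.posSemidef_sum _ fun g _ ↦ Matrix.posSemidef_conjTranspose_mul_self _)
  · simp only [Finset.mul_sum, Finset.sum_mul]
    exact Fintype.sum_equiv (Equiv.mulRight x) _ _ fun g ↦ by
      simp [Matrix.conjTranspose_mul, Matrix.mul_assoc]

theorem trace_map_inv_eq_star {G : Type*} [Group G] [Finite G] (A : G →* Matrix n n 𝕜) (g : G) :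
    (A g⁻¹).trace = star (A g).trace := by
  obtain ⟨H, hH, hinv⟩ := exists_posDef_conjTranspose_mul_mul_eq A
  have hdet : IsUnit H.det := (Matrix.isUnit_iff_isUnit_det _).1 hH.isUnit
  have hcomm : (A g)ᴴ * H = H * A g⁻¹ := by
    rw [← congrArg (· * A g⁻¹) (hinv g), Matrix.mul_assoc _ (A g), ← map_mul, mul_inv_cancel,
      map_one, Matrix.mul_one]
  calc (A g⁻¹).trace = (H⁻¹ * ((A g)ᴴ * H)).trace := by
        rw [hcomm, Matrix.nonsing_inv_mul_cancel_left _ _ hdet]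
    _ = ((A g)ᴴ).trace := by
        rw [Matrix.trace_mul_comm, Matrix.mul_nonsing_inv_cancel_right _ _ hdet]
    _ = star (A g).trace := Matrix.trace_conjTranspose _

end Unitarizable

section SquareSum

variable {k G V : Type*} [Field k] [CharZero k] [Group G] [Fintype G] [AddCommGroup V]
  [Module k V] [FiniteDimensional k V]

theorem sum_rho_eq_zero_of_sum_character_eq_zero (ρ : Representation k G V)
    (h : ∑ g, ρ.character g = 0) : ∑ g, ρ g = 0 := by
  have := invertibleOfNonzero (NeZero.ne (Nat.card G : k))
  have hrank : (Module.finrank k ρ.invariants : k) = 0 := by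
    rw [← Representation.card_inv_mul_sum_char_eq_finrank, h, mul_zero]
  have hbot : ρ.invariants = ⊥ := Submodule.finrank_eq_zero.1 (by exact_mod_cast hrank)
  ext v
  have hmem : ∑ g, ρ g v ∈ ρ.invariants := fun x ↦ by
    rw [map_sum]
    exact Fintype.sum_equiv (Equiv.mulLeft x) _ _ fun g ↦ by simp
  simpa [hbot] using hmem

theorem sum_character_sq_eq_zero (ρ : Representation k G V) (h : ∑ g, ρ.character g ^ 2 = 0) :
    ∑ g, ρ.character (g ^ 2) = 0 := by
  have hsum : ∑ g, (ρ.tprod ρ) g = 0 := by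
    refine sum_rho_eq_zero_of_sum_character_eq_zero _ ?_
    simpa only [Representation.char_tensor, Pi.mul_apply, ← pow_two] using h
  calc ∑ g, ρ.character (g ^ 2)
      = ∑ g, LinearMap.trace k _
          ((TensorProduct.comm k V V).toLinearMap ∘ₗ (ρ.tprod ρ) g) :=
        Finset.sum_congr rfl fun g _ ↦ by
          rw [Representation.tprod_apply, trace_comm_comp_tensorProduct_map, pow_two,
            Representation.character, map_mul, Module.End.mul_eq_comp]
    _ = 0 := by
        simp only [← Module.End.mul_eq_comp]
        rw [← map_sum, ← Finset.mul_sum, hsum, mul_zero, map_zero]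

end SquareSum

section Coinduced

variable {k G V : Type*} [Field k] [Group G] [Fintype G] {H : Subgroup G}
  [AddCommGroup V] [Module k V]

/-- The projection `f ↦ |H|⁻¹ ∑ h, ρ h ∘ f (h⁻¹ * ·)` of `G → V` onto the functions which are
equivariant under left multiplication by `H`, the space of the representation coinduced by `ρ`. -/
def coindProj (ρ : Representation k H V) : (G → V) →ₗ[k] (G → V) :=
  (Nat.card H : k)⁻¹ • ∑ h : H, LinearMap.pi fun s : G ↦ ρ h ∘ₗ LinearMap.proj ((h : G)⁻¹ * s)

theorem coindProj_apply (ρ : Representation k H V) (f : G → V) (s : G) :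
    coindProj ρ f s = (Nat.card H : k)⁻¹ • ∑ h : H, ρ h (f ((h : G)⁻¹ * s)) := by
  simp [coindProj]

theorem coindProj_single (ρ : Representation k H V) (s t : G) (v : V) :
    coindProj ρ (Pi.single s v) t =
      (Nat.card H : k)⁻¹ • if h : t * s⁻¹ ∈ H then ρ ⟨t * s⁻¹, h⟩ v else 0 := by
  have hiff (x : H) : (x : G)⁻¹ * t = s ↔ (x : G) = t * s⁻¹ := by
    rw [inv_mul_eq_iff_eq_mul, eq_mul_inv_iff_mul_eq, eq_comm]
  rw [coindProj_apply]
  congr 1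
  split_ifs with h
  · rw [Finset.sum_eq_single ⟨t * s⁻¹, h⟩]
    · simp
    · intro x _ hx
      rw [Pi.single_eq_of_ne (fun hs ↦ hx (Subtype.ext ((hiff x).1 hs))), map_zero]
    · simp
  · refine Finset.sum_eq_zero fun x _ ↦ ?_
    rw [Pi.single_eq_of_ne (fun hs ↦ h ((hiff x).1 hs ▸ x.2)), map_zero]

variable [NeZero (Nat.card H : k)]

theorem isProj_coindProj (ρ : Representation k H V) :
    LinearMap.IsProj (Representation.coindV H.subtype ρ) (coindProj ρ) where
  map_mem f := fun x s ↦ by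
    simp only [coindProj_apply, map_smul, map_sum]
    congr 1
    refine (Fintype.sum_equiv (Equiv.mulLeft x) _ _ fun h ↦ ?_).symm
    simp [mul_assoc]
  map_id f hf := by
    funext s
    have hconst (h : H) : ρ h (f ((h : G)⁻¹ * s)) = f s := by
      rw [← hf h, Subgroup.subtype_apply, mul_inv_cancel_left]
    rw [coindProj_apply, Finset.sum_congr rfl fun h _ ↦ hconst h, Finset.sum_const,
      Finset.card_univ, ← Nat.card_eq_fintype_card, ← Nat.cast_smul_eq_nsmul k,
      inv_smul_smul₀ (NeZero.ne _)]

theorem character_coind [FiniteDimensional k V] (ρ : Representation k H V) (g : G) :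
    (Representation.coind H.subtype ρ).character g =
      (∑ s : G, if h : s * g * s⁻¹ ∈ H then ρ.character ⟨s * g * s⁻¹, h⟩ else 0) /
        (Nat.card H : k) := by
  let T : (G → V) →ₗ[k] (G → V) := LinearMap.funLeft k V (· * g) ∘ₗ coindProj ρ
  have hT (f : G → V) : T f ∈ Representation.coindV H.subtype ρ :=
    (Representation.coind H.subtype ρ g ⟨_, (isProj_coindProj ρ).map_mem f⟩).2
  have hrestrict : Representation.coind H.subtype ρ g = T.restrict fun f _ ↦ hT f := by
    ext f : 2
    exact congrArg (LinearMap.funLeft k V (· * g)) ((isProj_coindProj ρ).map_id f f.2).symm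
  have hblock (s : G) : LinearMap.proj s ∘ₗ T ∘ₗ LinearMap.single k (fun _ ↦ V) s =
      (Nat.card H : k)⁻¹ • if h : s * g * s⁻¹ ∈ H then ρ ⟨s * g * s⁻¹, h⟩ else 0 := by
    ext v
    have := coindProj_single ρ s (s * g) v
    split_ifs at this ⊢ <;> simpa [T, LinearMap.funLeft_apply] using this
  rw [Representation.character, hrestrict,
    LinearMap.trace_restrict_eq_of_forall_mem _ T hT, trace_pi_eq_sum_trace, Finset.sum_div]
  refine Finset.sum_congr rfl fun s _ ↦ ?_
  rw [hblock, map_smul, smul_eq_mul, div_eq_inv_mul]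
  split_ifs
  · rfl
  · rw [map_zero]

end Coinduced

namespace IsIrrChar

variable {G : Type} [Group G] {χ ψ : G → ℂ}

theorem map_conj (hχ : IsIrrChar G χ) (a b : G) : χ (a * b * a⁻¹) = χ b := by
  obtain ⟨V, -, rfl⟩ := hχ
  exact V.char_conj b a

protected theorem map_inv [Finite G] (hχ : IsIrrChar G χ) (g : G) :
    χ g⁻¹ = starRingEnd ℂ (χ g) := by
  obtain ⟨V, -, rfl⟩ := hχ
  let b := Module.finBasis ℂ V
  have htrace (x : G) : V.character x = (LinearMap.toMatrixAlgEquiv b (V.ρ x)).trace :=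
    LinearMap.trace_eq_matrix_trace ℂ b _
  rw [htrace, htrace]
  exact trace_map_inv_eq_star ((LinearMap.toMatrixAlgEquiv b).toMulEquiv.toMonoidHom.comp V.ρ) g

theorem comp_mulEquiv [Finite G] {K : Type} [Group K] (hχ : IsIrrChar G χ) (e : K ≃* G) :
    IsIrrChar K (χ ∘ e) := by
  have := Fintype.ofFinite G
  have := Fintype.ofEquiv G e.symm.toEquiv
  obtain ⟨V, hV, rfl⟩ := hχ
  refine ⟨FDRep.of (V.ρ.comp e.toMonoidHom), ?_, rfl⟩
  rw [FDRep.simple_iff_char_is_norm_one] at hV ⊢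
  rw [Nat.card_congr e.toEquiv, ← hV]
  refine Fintype.sum_equiv e.toEquiv _ _ fun g ↦ ?_
  change V.character (e g) * V.character (e g⁻¹) = V.character (e g) * V.character (e g)⁻¹
  rw [map_inv]

protected theorem starChar [Finite G] (hχ : IsIrrChar G χ) : IsIrrChar G (starChar χ) := by
  have := Fintype.ofFinite G
  have hstar : starChar χ = fun g ↦ χ g⁻¹ := funext fun g ↦ (hχ.map_inv g).symm
  obtain ⟨V, hV, rfl⟩ := hχ
  refine ⟨FDRep.of (Representation.dual V.ρ), ?_, hstar.trans (funext fun g ↦ (V.char_dual g).symm)⟩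
  rw [FDRep.simple_iff_char_is_norm_one] at hV ⊢
  rw [← hV]
  exact Fintype.sum_equiv (Equiv.inv G) _ _ fun g ↦ by simp

variable [Fintype G]

theorem sum_mul_inv_self (hχ : IsIrrChar G χ) : ∑ g, χ g * χ g⁻¹ = Nat.card G := by
  obtain ⟨V, hV, rfl⟩ := hχ
  exact (FDRep.simple_iff_char_is_norm_one V).1 hV

theorem sum_mul_inv_eq_zero (hχ : IsIrrChar G χ) (hψ : IsIrrChar G ψ) (hne : χ ≠ ψ) :
    ∑ g, χ g * ψ g⁻¹ = 0 := by
  obtain ⟨V, hV, rfl⟩ := hχ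
  obtain ⟨W, hW, rfl⟩ := hψ
  have hcard : (Nat.card G : ℂ) ≠ 0 := NeZero.ne _
  have := invertibleOfNonzero hcard
  have horth := FDRep.char_orthonormal V W
  rw [if_neg fun ⟨i⟩ ↦ hne (FDRep.char_iso i)] at horth
  exact (mul_eq_zero.1 horth).resolve_left (inv_ne_zero hcard)

theorem sum_map_sq_eq_zero (hχ : IsIrrChar G χ) (hne : starChar χ ≠ χ) :
    ∑ g, χ (g ^ 2) = 0 := by
  have hsq : ∑ g, χ g ^ 2 = 0 := by
    rw [← hχ.sum_mul_inv_eq_zero hχ.starChar hne.symm]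
    refine Finset.sum_congr rfl fun g _ ↦ ?_
    rw [starChar, hχ.map_inv, Complex.conj_conj, pow_two]
  obtain ⟨V, -, rfl⟩ := hχ
  exact sum_character_sq_eq_zero V.ρ hsq

end IsIrrChar

section ConjChar

variable {G : Type} [Group G] {H : Subgroup G} {θ : H → ℂ}

theorem conjChar_eq_comp_conjNormal [H.Normal] (g : G) :
    conjChar H θ g = θ ∘ MulAut.conjNormal g := by
  funext n
  exact dif_pos (Subgroup.Normal.conj_mem inferInstance _ n.2 g)

theorem conjChar_mul [H.Normal] (a b : G) :
    conjChar H θ (a * b) = conjChar H (conjChar H θ a) b := by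
  simp only [conjChar_eq_comp_conjNormal, map_mul]
  rfl

theorem conjChar_of_mem (hθ : ∀ a b, θ (a * b * a⁻¹) = θ b) {g : G} (hg : g ∈ H) :
    conjChar H θ g = θ := by
  funext n
  rw [← hθ ⟨g, hg⟩ n]
  exact dif_pos (mul_mem (mul_mem hg n.2) (inv_mem hg))

theorem conjChar_eq_of_notMem_of_index_two (hH : H.index = 2)
    (hθ : ∀ a b, θ (a * b * a⁻¹) = θ b) {x y : G} (hx : x ∉ H) (hy : y ∉ H) :
    conjChar H θ x = conjChar H θ y := by
  have := Subgroup.normal_of_index_eq_two hH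
  have hmem : x * y⁻¹ ∈ H := by
    rw [Subgroup.mul_mem_iff_of_index_two hH, inv_mem_iff]
    exact iff_of_false hx hy
  rw [← inv_mul_cancel_right x y, conjChar_mul, conjChar_of_mem hθ hmem]

protected theorem IsIrrChar.conjChar [Finite H] [H.Normal] (hθ : IsIrrChar H θ) (g : G) :
    IsIrrChar H (conjChar H θ g) := by
  rw [conjChar_eq_comp_conjNormal]
  exact hθ.comp_mulEquiv _

theorem IsIrrChar.sum_mul_conjChar_inv [Fintype H] [H.Normal] (hθ : IsIrrChar H θ)
    (hne : ∀ g ∉ H, conjChar H θ g ≠ θ) (s : G) :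
    ∑ h : H, θ h * conjChar H θ s h⁻¹ = if s ∈ H then (Nat.card H : ℂ) else 0 := by
  split_ifs with hs
  · rw [conjChar_of_mem hθ.map_conj hs, hθ.sum_mul_inv_self]
  · exact hθ.sum_mul_inv_eq_zero (hθ.conjChar s) (hne s hs).symm

end ConjChar

section IndChar

variable {G : Type} [Group G]

/-- The extension by zero `θ°` to `G` of a function `θ` on the subgroup `H`, whose conjugates add up
to a multiple of the induced function. -/
def zeroExtend (H : Subgroup G) (θ : H → ℂ) (g : G) : ℂ :=
  if h : g ∈ H then θ ⟨g, h⟩ else 0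

variable {H : Subgroup G} {θ : H → ℂ}

@[simp]
theorem zeroExtend_coe (h : H) : zeroExtend H θ h = θ h := dif_pos h.2

theorem zeroExtend_of_notMem {g : G} (hg : g ∉ H) : zeroExtend H θ g = 0 := dif_neg hg

theorem zeroExtend_conjChar [H.Normal] (g x : G) :
    zeroExtend H (conjChar H θ g) x = zeroExtend H θ (g * x * g⁻¹) := by
  by_cases hx : x ∈ H
  · exact zeroExtend_coe (⟨x, hx⟩ : H)
  · rw [zeroExtend_of_notMem hx, zeroExtend_of_notMem]
    rwa [← Subgroup.Normal.mem_comm_iff inferInstance, inv_mul_cancel_left]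

variable [Fintype G]

theorem sum_zeroExtend_mul (φ : G → ℂ) : ∑ g, zeroExtend H θ g * φ g = ∑ h : H, θ h * φ h := by
  have hout (g : {g // g ∉ H}) : zeroExtend H θ g * φ g = 0 := by
    rw [zeroExtend_of_notMem g.2, zero_mul]
  rw [← Fintype.sum_subtype_add_sum_subtype (· ∈ H), Finset.sum_eq_zero fun g _ ↦ hout g, add_zero]
  exact Finset.sum_congr rfl fun h _ ↦ by rw [zeroExtend_coe]

theorem sum_sum_conj {R : Type*} [NonAssocSemiring R] (f : G → R) :
    ∑ g, ∑ s, f (s * g * s⁻¹) = Nat.card G * ∑ g, f g := by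
  have hreindex (s : G) : ∑ g, f (s * g * s⁻¹) = ∑ g, f g :=
    Equiv.sum_comp (MulAut.conj s).toEquiv f
  simp [Finset.sum_comm (f := fun g s ↦ f (s * g * s⁻¹)), hreindex]

theorem indChar_apply (g : G) :
    indChar H θ g = (∑ s, zeroExtend H θ (s * g * s⁻¹)) / Nat.card H := rfl

theorem indChar_coe (h : H) : indChar H θ h = (∑ s, conjChar H θ s h) / Nat.card H := rfl

theorem indChar_conj (a g : G) : indChar H θ (a * g * a⁻¹) = indChar H θ g := by
  rw [indChar_apply, indChar_apply]
  congr 1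
  exact Fintype.sum_equiv (Equiv.mulRight a) _ _ fun s ↦ by simp [mul_assoc]

theorem starChar_indChar : starChar (indChar H θ) = indChar H (starChar θ) := by
  funext g
  simp only [starChar, indChar, map_div₀, map_sum, map_natCast, apply_dite (starRingEnd ℂ),
    map_zero]

theorem indChar_conjChar [H.Normal] (a : G) : indChar H (conjChar H θ a) = indChar H θ := by
  funext g
  simp only [indChar_apply, zeroExtend_conjChar]
  congr 1
  exact Fintype.sum_equiv (Equiv.mulLeft a) _ _ fun s ↦ by simp [mul_assoc]

theorem sum_indChar_mul {φ : G → ℂ} (hφ : ∀ a g, φ (a * g * a⁻¹) = φ g) :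
    ∑ g, indChar H θ g * φ g = Nat.card G / Nat.card H * ∑ h : H, θ h * φ h := by
  have haverage := sum_sum_conj fun g ↦ zeroExtend H θ g * φ g
  simp only [hφ, ← Finset.sum_mul] at haverage
  rw [← sum_zeroExtend_mul, div_mul_eq_mul_div, ← haverage, Finset.sum_div]
  exact Finset.sum_congr rfl fun g _ ↦ by rw [indChar_apply, div_mul_eq_mul_div]

theorem FS_indChar : FS G (indChar H θ) = (∑ g : G, zeroExtend H θ (g ^ 2)) / Nat.card H := by
  have haverage := sum_sum_conj fun g ↦ zeroExtend H θ (g ^ 2)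
  simp only [conj_pow] at haverage
  have hG : (Nat.card G : ℂ) ≠ 0 := NeZero.ne _
  simp only [FS, indChar_apply, ← Finset.sum_div]
  rw [haverage, ← Nat.card_eq_fintype_card, mul_div_assoc, mul_div_cancel_left₀ _ hG]

theorem IsIrrChar.sum_indChar_mul_inv [H.Normal] (hθ : IsIrrChar H θ)
    (hne : ∀ g ∉ H, conjChar H θ g ≠ θ) :
    ∑ g, indChar H θ g * indChar H θ g⁻¹ = Nat.card G := by
  have hH : (Nat.card H : ℂ) ≠ 0 := NeZero.ne _
  have hrestrict : ∑ h : H, θ h * indChar H θ (h : G)⁻¹ = Nat.card H := by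
    calc ∑ h : H, θ h * indChar H θ (h : G)⁻¹
        = ∑ s : G, (∑ h : H, θ h * conjChar H θ s h⁻¹) / Nat.card H := by
          simp only [← Subgroup.coe_inv, indChar_coe, Finset.sum_div, Finset.mul_sum,
            mul_div_assoc]
          exact Finset.sum_comm
      _ = ∑ s : G, if s ∈ H then 1 else 0 := by
          simp only [hθ.sum_mul_conjChar_inv hne, ite_div, div_self hH, zero_div]
      _ = Nat.card H := by
          rw [Finset.sum_boole, ← Fintype.card_subtype, ← Nat.card_eq_fintype_card]
  rw [sum_indChar_mul (φ := fun g ↦ indChar H θ g⁻¹) fun a g ↦ by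
    rw [conj_inv, indChar_conj], hrestrict, div_mul_cancel₀ _ hH]

protected theorem IsIrrChar.indChar [H.Normal] (hθ : IsIrrChar H θ)
    (hne : ∀ g ∉ H, conjChar H θ g ≠ θ) : IsIrrChar G (indChar H θ) := by
  have hnorm := hθ.sum_indChar_mul_inv hne
  obtain ⟨V, -, rfl⟩ := hθ
  let W : FDRep ℂ G := FDRep.of (Representation.coind H.subtype V.ρ)
  have hW : indChar H V.character = W.character :=
    funext fun g ↦ (character_coind V.ρ g).symm
  refine ⟨W, ?_, hW⟩
  rwa [FDRep.simple_iff_char_is_norm_one, ← hW]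

theorem sum_zeroExtend_sq (hH : H.index = 2) :
    ∑ g, zeroExtend H θ (g ^ 2) = ∑ h : H, θ (h ^ 2) +
      ∑ s ∈ Finset.univ.filter (fun s : G ↦ s ∉ H),
        θ ⟨s ^ 2, Subgroup.sq_mem_of_index_two hH s⟩ := by
  have hsq (s : G) : zeroExtend H θ (s ^ 2) = θ ⟨s ^ 2, Subgroup.sq_mem_of_index_two hH s⟩ :=
    dif_pos _
  simp only [hsq]
  rw [← Fintype.sum_subtype_add_sum_subtype (· ∈ H), ← Finset.sum_subtype_eq_sum_filter,
    Finset.subtype_univ]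
  rfl

end IndChar

/-- If `X ≤ Y` has index 2, `θ ∈ Irr(X)` with `θ̄ ≠ θ` and `θ^y = θ̄` for some
`y ∈ Y∖X`, then `θ^Y` is a real-valued irreducible character of `Y` and
`ε(θ^Y) = (1/|X|) ∑_{s ∈ Y∖X} θ(s²)`. -/
theorem stmt5 {Y : Type} [Group Y] [Fintype Y] (X : Subgroup Y) (hX : X.index = 2)
    (θ : ↥X → ℂ) (hθ : IsIrrChar ↥X θ) (hnr : starChar θ ≠ θ)
    (y : Y) (hy : y ∉ X) (hconj : conjChar X θ y = starChar θ) :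
    IsIrrChar Y (indChar X θ) ∧
    (∀ g : Y, (starRingEnd ℂ) (indChar X θ g) = indChar X θ g) ∧
    FS Y (indChar X θ) =
      (∑ s ∈ Finset.univ.filter (fun s : Y => s ∉ X),
        θ ⟨s ^ 2, Subgroup.sq_mem_of_index_two hX s⟩) / (Nat.card X : ℂ) := by
  have := Subgroup.normal_of_index_eq_two hX
  refine ⟨hθ.indChar fun g hg ↦ ?_, congrFun ?_, ?_⟩
  · rwa [conjChar_eq_of_notMem_of_index_two hX hθ.map_conj hg hy, hconj]
  · change starChar (indChar X θ) = indChar X θ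
    rw [starChar_indChar, ← hconj, indChar_conjChar]
  · rw [FS_indChar, sum_zeroExtend_sq hX, hθ.sum_map_sq_eq_zero hnr, zero_add]
end
end

section
/- Let E be a finite 2-group, D ≤ E a subgroup of index 2, Q a cyclic group of order 3, and G = Q ⋊ E the semidirect product in which D acts trivially on Q and every element of E∖D acts on Q by inversion. Fix a nontrivial irreducible character θ of Q, and for λ ∈ Irr(D) let χ_λ := (θ × λ)^G be the character of G induced from the irreducible character θ × λ of the subgroup Q × D. Then: (1) each χ_λ is an irreducible character of G of degree 2λ(1); (2) the map λ ↦ χ_λ is a bijection from Irr(D) onto the set of irreducible characters of G whose kernel does not contain Q; and (3) χ_λ is real-valued if and only if λ^t = λ̄ for some (equivalently, every) t ∈ E∖D. -/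
open scoped BigOperators
attribute [local instance] Classical.propDecidable

noncomputable section

instance semidirectProductFintype {N G : Type} [Group N] [Group G] [Fintype N] [Fintype G]
    (φ : G →* MulAut N) : Fintype (N ⋊[φ] G) :=
  Fintype.ofEquiv (N × G)
    { toFun := fun p => ⟨p.1, p.2⟩
      invFun := fun x => (x.left, x.right)
      left_inv := fun _ => rfl
      right_inv := fun _ => rfl }

/-!
This is the little group method of Wigner and Mackey. Let `θ` be a linear character of `Q` with
inertia group `D` in `E`. For a character `χ` of `Q ⋊ E`, the group `D` acts on the `θ`-isotypic
component of `χ` restricted to `Q`; its character there is a left inverse of `λ ↦ (θ × λ)^G` and, by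
Frobenius reciprocity, its adjoint up to a scalar. So `λ ↦ (θ × λ)^G` preserves norms, is injective
on irreducible characters, and reaches every irreducible `χ` whose restriction to `Q` contains `θ`.

When every element of `E` outside `D` inverts `Q`, such an element `t` carries `θ` to its complex
conjugate, so the conjugate of `(θ × λ)^G` is `(θ × μ)^G` with `μ` the conjugate of `λ^t`, and the
realness criterion follows from injectivity. For `|Q| = 3`, a character of `G` takes a single value
on `Q ∖ {1}`, so its restriction to `Q` contains `θ` as soon as it is not constant on `Q`.
-/

section Characters

variable {G : Type} [Group G]

/-- `χ` is the character of a finite-dimensional complex representation of `G`. -/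
def IsChar (G : Type) [Group G] (χ : G → ℂ) : Prop :=
  ∃ V : FDRep ℂ G, χ = V.character

/-- `f` is constant on the conjugacy classes of `G`. -/
def IsClassFunction {α : Type} (f : G → α) : Prop :=
  ∀ g x : G, f (x * g * x⁻¹) = f g

lemma starChar_involutive {α : Type} : Function.Involutive (starChar (α := α)) :=
  fun θ => funext fun a => Complex.conj_conj (θ a)

lemma IsChar.isClassFunction {χ : G → ℂ} (hχ : IsChar G χ) : IsClassFunction χ := by
  obtain ⟨V, rfl⟩ := hχ
  exact V.char_conj

lemma IsIrrChar.isChar {χ : G → ℂ} (hχ : IsIrrChar G χ) : IsChar G χ :=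
  let ⟨V, _, h⟩ := hχ
  ⟨V, h⟩

lemma isChar_character {V : Type} [AddCommGroup V] [Module ℂ V] [FiniteDimensional ℂ V]
    (ρ : Representation ℂ G V) : IsChar G ρ.character :=
  ⟨FDRep.of ρ, rfl⟩

lemma IsChar.comp_monoidHom {H : Type} [Group H] {χ : G → ℂ} (hχ : IsChar G χ) (f : H →* G) :
    IsChar H (χ ∘ f) := by
  obtain ⟨V, rfl⟩ := hχ
  exact isChar_character (MonoidHom.comp V.ρ f)

/-- The tensor product of a representation with a linear character. -/
def linearTwist {k V : Type*} [Field k] [AddCommGroup V] [Module k V] (f : G →* k)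
    (ρ : Representation k G V) : Representation k G V where
  toFun g := f g • ρ g
  map_one' := by rw [map_one, map_one, one_smul]
  map_mul' g h := by rw [map_mul, map_mul, smul_mul_smul_comm]

lemma IsChar.linear_mul {χ : G → ℂ} (hχ : IsChar G χ) (f : G →* ℂ) :
    IsChar G fun g => f g * χ g := by
  obtain ⟨V, rfl⟩ := hχ
  convert isChar_character (linearTwist f V.ρ) using 1
  ext g
  exact (map_smul (LinearMap.trace ℂ V) (f g) (V.ρ g)).symm

lemma IsChar.apply_one_eq_zero_iff {χ : G → ℂ} (hχ : IsChar G χ) : χ 1 = 0 ↔ χ = 0 := by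
  refine ⟨fun h => ?_, fun h => congrFun h 1⟩
  obtain ⟨V, rfl⟩ := hχ
  rw [FDRep.char_one, Nat.cast_eq_zero, Module.finrank_zero_iff] at h
  exact funext fun g => (congrArg _ (Subsingleton.elim (V.ρ g) 0)).trans (map_zero _)

lemma isIrrChar_iff [Fintype G] {χ : G → ℂ} (hχ : IsChar G χ) :
    IsIrrChar G χ ↔ ∑ g, χ g * χ g⁻¹ = Nat.card G := by
  obtain ⟨V, rfl⟩ := hχ
  rw [← FDRep.simple_iff_char_is_norm_one]
  constructor
  · rintro ⟨W, hW, hVW⟩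
    rw [FDRep.simple_iff_char_is_norm_one] at hW ⊢
    rwa [hVW]
  · exact fun hV => ⟨V, hV, rfl⟩

lemma IsIrrChar.ne_zero [Finite G] {χ : G → ℂ} (hχ : IsIrrChar G χ) : χ ≠ 0 := by
  cases nonempty_fintype G
  rintro rfl
  have hnorm := (isIrrChar_iff hχ.isChar).1 hχ
  simp only [Pi.zero_apply, mul_zero, Finset.sum_const_zero] at hnorm
  exact NeZero.ne _ hnorm.symm

lemma IsIrrChar.eq_of_sum_ne_zero [Fintype G] {χ ψ : G → ℂ} (hχ : IsIrrChar G χ)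
    (hψ : IsIrrChar G ψ) (h : ∑ g, χ g * ψ g⁻¹ ≠ 0) : χ = ψ := by
  obtain ⟨V, hV, rfl⟩ := hχ
  obtain ⟨W, hW, rfl⟩ := hψ
  have := invertibleOfNonzero (NeZero.ne (Nat.card G : ℂ))
  by_cases hVW : Nonempty (V ≅ W)
  · exact FDRep.char_iso hVW.some
  · have horth := FDRep.char_orthonormal V W
    rw [if_neg hVW] at horth
    exact absurd horth (mul_ne_zero (inv_ne_zero (NeZero.ne _)) h)

lemma isIrrChar_character [Finite G] {V : Type} [AddCommGroup V] [Module ℂ V]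
    [FiniteDimensional ℂ V] (ρ : Representation ℂ G V) [ρ.IsIrreducible] :
    IsIrrChar G ρ.character := by
  cases nonempty_fintype G
  have := invertibleOfNonzero (NeZero.ne (Nat.card G : ℂ))
  have horth := Representation.char_orthonormal ρ ρ
  rw [if_pos ⟨Representation.Equiv.refl ρ⟩] at horth
  rw [isIrrChar_iff (isChar_character ρ)]
  exact ((inv_mul_eq_one₀ (NeZero.ne _)).1 horth).symm

end Characters

section Subrepresentations

variable {k G V : Type*} [Field k] [Group G] [AddCommGroup V] [Module k V]
  {ρ : Representation k G V}

/-- A subrepresentation of a subrepresentation `τ` of `ρ`, viewed inside `ρ`. -/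
def mapSubtype (τ : Subrepresentation ρ) (σ : Subrepresentation τ.toRepresentation) :
    Subrepresentation ρ where
  toSubmodule := σ.toSubmodule.map τ.toSubmodule.subtype
  apply_mem_toSubmodule g := by
    rintro _ ⟨w, hw, rfl⟩
    exact ⟨τ.toRepresentation g w, σ.apply_mem_toSubmodule g hw, rfl⟩

lemma isIrreducible_toRepresentation_of_isAtom {τ : Subrepresentation ρ} (hτ : IsAtom τ) :
    τ.toRepresentation.IsIrreducible where
  exists_pair_ne := ⟨⊥, ⊤, fun h => hτ.1 <| Subrepresentation.toSubmodule_injective <|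
    Submodule.subsingleton_iff_eq_bot.1 <| (Submodule.subsingleton_iff k).1 <|
      subsingleton_of_bot_eq_top (congrArg Subrepresentation.toSubmodule h)⟩
  eq_bot_or_eq_top σ := by
    have hle : mapSubtype τ σ ≤ τ := Submodule.map_subtype_le _ σ.toSubmodule
    have hinj := Submodule.map_injective_of_injective τ.toSubmodule.injective_subtype
    refine (hτ.le_iff.1 hle).imp (fun h => ?_) (fun h => ?_) <;>
      refine Subrepresentation.toSubmodule_injective (hinj ?_)
    · exact (congrArg Subrepresentation.toSubmodule h).trans (Submodule.map_bot _).symm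
    · exact (congrArg Subrepresentation.toSubmodule h).trans (Submodule.map_subtype_top _).symm

lemma exists_isAtom_subrepresentation [FiniteDimensional k V] [Nontrivial V]
    (ρ : Representation k G V) : ∃ τ : Subrepresentation ρ, IsAtom τ := by
  have hmono : StrictMono (Subrepresentation.toSubmodule (ρ := ρ)) := fun _ _ h => h
  have : WellFoundedLT (Subrepresentation ρ) := hmono.wellFoundedLT
  have : IsAtomic (Subrepresentation ρ) := isAtomic_of_orderBot_wellFounded_lt wellFounded_lt
  have : Nontrivial (Subrepresentation ρ) :=
    ⟨⊥, ⊤, fun h => bot_ne_top (congrArg Subrepresentation.toSubmodule h)⟩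
  exact IsAtomic.exists_atom _

end Subrepresentations

section Constituents

variable {G : Type} [Group G]

lemma exists_isIrreducible_subrepresentation_sum_ne_zero [Fintype G] {V : Type} [AddCommGroup V]
    [Module ℂ V] [FiniteDimensional ℂ V] [Nontrivial V] (ρ : Representation ℂ G V) :
    ∃ τ : Subrepresentation ρ, τ.toRepresentation.IsIrreducible ∧
      ∑ g, ρ.character g * τ.toRepresentation.character g⁻¹ ≠ 0 := by
  have := invertibleOfNonzero (NeZero.ne (Nat.card G : ℂ))
  obtain ⟨τ, hτ⟩ := exists_isAtom_subrepresentation ρ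
  have hirr := isIrreducible_toRepresentation_of_isAtom hτ
  let ι : Representation.IntertwiningMap τ.toRepresentation ρ :=
    { τ.toSubmodule.subtype with isIntertwining' := fun _ => rfl }
  have hι : ι ≠ 0 := fun h => hτ.1 <| Subrepresentation.toSubmodule_injective <| by
    rw [← Submodule.range_subtype τ.toSubmodule]
    exact LinearMap.range_eq_bot.2 (congrArg Representation.IntertwiningMap.toLinearMap h)
  have : FiniteDimensional ℂ (Representation.IntertwiningMap τ.toRepresentation ρ) :=
    (Representation.invariantsEquivIntertwiningMap τ.toRepresentation ρ).finiteDimensional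
  have : Module.finrank ℂ (Representation.IntertwiningMap τ.toRepresentation ρ) ≠ 0 :=
    fun h => hι (Module.finrank_zero_iff.1 h |>.elim _ _)
  refine ⟨τ, hirr, fun h => this ?_⟩
  rw [← Nat.cast_eq_zero (R := ℂ),
    ← Representation.card_inv_mul_sum_char_mul_char_eq_finrank, h, mul_zero]

lemma IsChar.exists_isIrreducible_sum_ne_zero [Fintype G] {χ : G → ℂ} (hχ : IsChar G χ)
    (h0 : χ ≠ 0) : ∃ (W : Type) (_ : AddCommGroup W) (_ : Module ℂ W) (_ : FiniteDimensional ℂ W)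
      (σ : Representation ℂ G W), σ.IsIrreducible ∧ ∑ g, χ g * σ.character g⁻¹ ≠ 0 := by
  obtain ⟨V, rfl⟩ := hχ
  have : Nontrivial V := by
    refine not_subsingleton_iff_nontrivial.1 fun _ => h0 (funext fun g => ?_)
    exact (congrArg _ (Subsingleton.elim (V.ρ g) 0)).trans (map_zero _)
  obtain ⟨τ, hτ, hsum⟩ := exists_isIrreducible_subrepresentation_sum_ne_zero V.ρ
  exact ⟨τ.toSubmodule, inferInstance, inferInstance, inferInstance, τ.toRepresentation, hτ, hsum⟩

lemma IsChar.exists_isIrrChar_sum_ne_zero [Fintype G] {χ : G → ℂ} (hχ : IsChar G χ)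
    (h0 : χ ≠ 0) : ∃ μ, IsIrrChar G μ ∧ ∑ g, χ g * μ g⁻¹ ≠ 0 := by
  obtain ⟨W, _, _, _, σ, _, hsum⟩ := hχ.exists_isIrreducible_sum_ne_zero h0
  exact ⟨σ.character, isIrrChar_character σ, hsum⟩

lemma IsIrrChar.exists_isIrreducible [Finite G] {χ : G → ℂ} (hχ : IsIrrChar G χ) :
    ∃ (W : Type) (_ : AddCommGroup W) (_ : Module ℂ W) (_ : FiniteDimensional ℂ W)
      (σ : Representation ℂ G W), σ.IsIrreducible ∧ χ = σ.character := by
  cases nonempty_fintype G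
  obtain ⟨W, _, _, _, σ, hσ, hsum⟩ := hχ.isChar.exists_isIrreducible_sum_ne_zero hχ.ne_zero
  exact ⟨W, _, _, inferInstance, σ, hσ, hχ.eq_of_sum_ne_zero (isIrrChar_character σ) hsum⟩

end Constituents

section LinearCharacters

variable {Q : Type} [Group Q]

lemma trace_mul_of_finrank_eq_one {k V : Type*} [Field k] [AddCommGroup V] [Module k V]
    (hV : Module.finrank k V = 1) (f g : Module.End k V) :
    LinearMap.trace k V (f * g) = LinearMap.trace k V f * LinearMap.trace k V g := by
  obtain ⟨a, rfl, -⟩ := LinearMap.existsUnique_eq_smul_id_of_finrank_eq_one hV f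
  have : FiniteDimensional k V := .of_finrank_eq_succ hV
  have hone : LinearMap.trace k V 1 = 1 := by rw [LinearMap.trace_one, hV, Nat.cast_one]
  simp only [← Module.End.one_eq_id, smul_mul_assoc, one_mul, map_smul, hone, smul_eq_mul, mul_one]

lemma IsIrrChar.exists_monoidHom [Finite Q] [IsMulCommutative Q] {θ : Q → ℂ}
    (hθ : IsIrrChar Q θ) : ∃ f : Q →* ℂ, θ = f := by
  obtain ⟨W, _, _, _, σ, hσ, rfl⟩ := hθ.exists_isIrreducible
  have hW : Module.finrank ℂ W = 1 :=
    Representation.IsIrreducible.finrank_eq_one_of_isMulCommutative σ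
  exact ⟨{ toFun := σ.character
           map_one' := by rw [Representation.char_one, hW, Nat.cast_one]
           map_mul' := fun a b =>
            (congrArg _ (map_mul σ a b)).trans (trace_mul_of_finrank_eq_one hW _ _) }, rfl⟩

lemma starRingEnd_apply_eq_apply_inv [Finite Q] (θ : Q →* ℂ) (q : Q) :
    (starRingEnd ℂ) (θ q) = θ q⁻¹ := by
  have hnorm : ‖θ q‖ = 1 := by
    refine Complex.norm_eq_one_of_pow_eq_one (n := Nat.card Q) ?_ Nat.card_pos.ne'
    rw [← map_pow, pow_card_eq_one', map_one]
  rw [← Complex.inv_eq_conj hnorm]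
  exact inv_eq_of_mul_eq_one_right (by rw [← map_mul, mul_inv_cancel, map_one])

lemma sum_starRingEnd_mul_eq_ite [Fintype Q] (θ ψ : Q →* ℂ) :
    ∑ q, (starRingEnd ℂ) (θ q) * ψ q = if ψ = θ then (Fintype.card Q : ℂ) else 0 := by
  have hmul (q : Q) : θ q * θ q⁻¹ = 1 := by rw [← map_mul, mul_inv_cancel, map_one]
  let f : Q →* ℂ := (starRingEnd ℂ : ℂ →* ℂ).comp θ * ψ
  have hf : f = 1 ↔ ψ = θ := by
    simp only [MonoidHom.ext_iff]
    refine forall_congr' fun q => ?_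
    change (starRingEnd ℂ) (θ q) * ψ q = 1 ↔ ψ q = θ q
    rw [starRingEnd_apply_eq_apply_inv]
    constructor <;> intro h
    · linear_combination θ q * h - ψ q * hmul q
    · linear_combination hmul q + θ q⁻¹ * h
  calc ∑ q, (starRingEnd ℂ) (θ q) * ψ q = ∑ q, f q := rfl
    _ = if ψ = θ then (Fintype.card Q : ℂ) else 0 := by
      rw [sum_hom_units]
      simp only [hf, Nat.cast_ite, Nat.cast_zero]

end LinearCharacters

section Averaging

variable {G V : Type} [Group G] [AddCommGroup V] [Module ℂ V]

lemma isChar_trace_mul_of_isIdempotentElem [FiniteDimensional ℂ V] (ρ : Representation ℂ G V)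
    {p : Module.End ℂ V} (hp : IsIdempotentElem p) (hcomm : ∀ g, Commute (ρ g) p) :
    IsChar G fun g => LinearMap.trace ℂ V (ρ g * p) := by
  have hmem (g : G) (v : V) : ρ g (p v) ∈ LinearMap.range p :=
    ⟨ρ g v, (LinearMap.congr_fun (hcomm g) v).symm⟩
  let τ : Subrepresentation ρ := ⟨LinearMap.range p, by rintro g _ ⟨v, rfl⟩; exact hmem g v⟩
  convert isChar_character τ.toRepresentation using 1
  ext g
  rw [← LinearMap.trace_restrict_eq_of_forall_mem (LinearMap.range p) (ρ g * p) (hmem g)]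
  refine congrArg _ (LinearMap.ext ?_)
  rintro ⟨_, v, rfl⟩
  exact Subtype.ext (congrArg (ρ g) (LinearMap.congr_fun hp v))

lemma isIdempotentElem_card_inv_smul_sum {k K V : Type*} [Field k] [Group K] [Fintype K]
    [NeZero (Fintype.card K : k)] [AddCommGroup V] [Module k V] (σ : Representation k K V) :
    IsIdempotentElem ((Fintype.card K : k)⁻¹ • ∑ a, σ a) := by
  have hmul : (∑ a, σ a) * ∑ a, σ a = (Fintype.card K : k) • ∑ a, σ a := by
    have (a : K) : σ a * ∑ b, σ b = ∑ b, σ b := by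
      rw [Finset.mul_sum]
      exact Fintype.sum_equiv (Equiv.mulLeft a) _ _ fun b => (map_mul σ a b).symm
    rw [Finset.sum_mul, Finset.sum_congr rfl fun a _ => this a, Finset.sum_const,
      Finset.card_univ, Nat.cast_smul_eq_nsmul]
  rw [IsIdempotentElem, smul_mul_smul_comm, hmul, smul_smul, mul_assoc,
    inv_mul_cancel₀ (NeZero.ne _), mul_one]

lemma isChar_average [FiniteDimensional ℂ V] {K : Type} [Group K] [Fintype K]
    (ρ : Representation ℂ G V) (σ : Representation ℂ K V)
    (hcomm : ∀ g, Commute (ρ g) (∑ k, σ k)) :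
    IsChar G fun g => (Fintype.card K : ℂ)⁻¹ * ∑ k, LinearMap.trace ℂ V (ρ g * σ k) := by
  convert isChar_trace_mul_of_isIdempotentElem ρ (isIdempotentElem_card_inv_smul_sum σ)
    fun g => (hcomm g).smul_right _ using 2
  rw [mul_smul_comm, map_smul, smul_eq_mul, Finset.mul_sum _ _ (ρ _), map_sum]

lemma trace_pi {k V ι : Type*} [Field k] [AddCommGroup V] [Module k V] [FiniteDimensional k V]
    [Fintype ι] (f : Module.End k (ι → V)) :
    LinearMap.trace k (ι → V) f = ∑ i, LinearMap.trace k V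
      (LinearMap.proj i ∘ₗ f ∘ₗ LinearMap.single k (fun _ => V) i) := by
  have hid : f = ∑ i, f ∘ₗ LinearMap.single k (fun _ => V) i ∘ₗ LinearMap.proj i := by
    refine LinearMap.ext fun v => ?_
    conv_lhs => rw [← Finset.univ_sum_single v, map_sum]
    rw [LinearMap.sum_apply]
    rfl
  conv_lhs => rw [hid, map_sum]
  exact Finset.sum_congr rfl fun i _ =>
    LinearMap.trace_comp_comm' (LinearMap.proj i) (f ∘ₗ LinearMap.single k (fun _ => V) i)

end Averaging

section Induction

variable {G : Type} [Group G] {H : Subgroup G}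

/-- The left action of `H` on the functions `G → V`, whose invariants are the `H`-equivariant
functions, the space of the induced representation. -/
def translationRep {k V : Type*} [Field k] [AddCommGroup V] [Module k V]
    (ρ : Representation k H V) : Representation k H (G → V) where
  toFun h := (ρ h).compLeft G ∘ₗ LinearMap.funLeft k V fun x => (h : G)⁻¹ * x
  map_one' := by ext; simp
  map_mul' h h' := by ext; simp [mul_assoc]

/-- The action of `G` on the functions `G → V` by right translation. -/
def rightTranslationRep (k G V : Type*) [Field k] [Group G] [AddCommGroup V] [Module k V] :
    Representation k G (G → V) where
  toFun g := LinearMap.funLeft k V fun x => x * g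
  map_one' := by ext; simp
  map_mul' h k := by ext; simp [mul_assoc]

variable [Fintype G]

lemma trace_rightTranslationRep_mul_translationRep {V : Type} [AddCommGroup V] [Module ℂ V]
    [FiniteDimensional ℂ V] (ρ : Representation ℂ H V) (g : G) (h : H) :
    LinearMap.trace ℂ (G → V) (rightTranslationRep ℂ G V g * translationRep ρ h) =
      ∑ x, if x * g * x⁻¹ = h then ρ.character h else 0 := by
  rw [trace_pi]
  refine Finset.sum_congr rfl fun x _ => ?_
  have hiff : (h : G)⁻¹ * (x * g) = x ↔ x * g * x⁻¹ = h := by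
    rw [inv_mul_eq_iff_eq_mul, mul_inv_eq_iff_eq_mul]
  have happly (v : V) : (LinearMap.proj x ∘ₗ (rightTranslationRep ℂ G V g * translationRep ρ h) ∘ₗ
      LinearMap.single ℂ (fun _ => V) x) v = ρ h ((Pi.single x v : G → V) ((h : G)⁻¹ * (x * g))) :=
    rfl
  split_ifs with hx
  · refine congrArg _ (LinearMap.ext fun v => ?_)
    rw [happly, hiff.2 hx, Pi.single_eq_same]
  · refine (congrArg _ (LinearMap.ext fun v => ?_)).trans (map_zero _)
    rw [happly, Pi.single_eq_of_ne (mt hiff.1 hx), map_zero, LinearMap.zero_apply]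

lemma isChar_indChar {ψ : H → ℂ} (hψ : IsChar H ψ) : IsChar G (indChar H ψ) := by
  obtain ⟨V, rfl⟩ := hψ
  have hcomm (g : G) (h : H) :
      Commute (rightTranslationRep ℂ G V g) (translationRep V.ρ h) := by
    refine LinearMap.ext fun F => funext fun x => ?_
    exact congrArg (fun y => V.ρ h (F y)) (mul_assoc _ x g).symm
  convert isChar_average (rightTranslationRep ℂ G V) (translationRep V.ρ)
    fun g => Commute.sum_right _ _ _ fun h _ => hcomm g h using 2 with g
  rw [indChar, div_eq_inv_mul, Nat.card_eq_fintype_card]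
  simp only [trace_rightTranslationRep_mul_translationRep]
  rw [Finset.sum_comm]
  congr 1
  refine Finset.sum_congr rfl fun x _ => ?_
  split_ifs with hx
  · rw [Finset.sum_eq_single ⟨_, hx⟩ (fun h _ hne => if_neg fun heq => hne (Subtype.ext heq.symm))
      (fun h => absurd (Finset.mem_univ _) h), if_pos rfl]
    rfl
  · exact (Finset.sum_eq_zero fun h _ => if_neg fun heq => hx (by rw [heq]; exact h.2)).symm

end Induction

section Frobenius

variable {G : Type} [Group G] [Fintype G]

lemma sum_dite_mem_subgroup {M : Type*} [AddCommMonoid M] (H : Subgroup G) (f : H → M) :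
    ∑ g, (if h : g ∈ H then f ⟨g, h⟩ else 0) = ∑ h, f h :=
  (Fintype.sum_of_injective Subtype.val Subtype.val_injective f
    (fun g => if h : g ∈ H then f ⟨g, h⟩ else 0)
    (fun _ hg => dif_neg fun h => hg ⟨⟨_, h⟩, rfl⟩) fun h => by rw [dif_pos h.2]).symm

lemma sum_indChar_mul_inv (H : Subgroup G) (ψ : H → ℂ) {χ : G → ℂ} (hχ : IsClassFunction χ) :
    ∑ g, indChar H ψ g * χ g⁻¹ = H.index * ∑ h : H, ψ h * χ (h : G)⁻¹ := by
  have hconj (s : G) : ∑ g, (if h : s * g * s⁻¹ ∈ H then ψ ⟨s * g * s⁻¹, h⟩ else 0) * χ g⁻¹ =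
      ∑ h : H, ψ h * χ (h : G)⁻¹ := by
    rw [← sum_dite_mem_subgroup H]
    refine Fintype.sum_equiv (MulAut.conj s).toEquiv _ _ fun g => ?_
    have : χ (s * g * s⁻¹)⁻¹ = χ g⁻¹ := by rw [← hχ g⁻¹ s]; group
    simp only [MulEquiv.toEquiv_eq_coe, MulEquiv.coe_toEquiv, MulAut.conj_apply, this, dite_mul,
      zero_mul]
  have hcard : (Fintype.card G : ℂ) / Nat.card H = H.index := by
    rw [div_eq_iff (NeZero.ne _), ← Nat.card_eq_fintype_card, ← H.index_mul_card, Nat.cast_mul]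
  calc ∑ g, indChar H ψ g * χ g⁻¹
      = (∑ s : G, ∑ g, (if h : s * g * s⁻¹ ∈ H then ψ ⟨s * g * s⁻¹, h⟩ else 0) * χ g⁻¹) /
          Nat.card H := by
        rw [Finset.sum_comm, Finset.sum_div]
        refine Finset.sum_congr rfl fun g _ => ?_
        rw [indChar, div_mul_eq_mul_div, Finset.sum_mul]
    _ = H.index * ∑ h : H, ψ h * χ (h : G)⁻¹ := by
        rw [Finset.sum_congr rfl fun s _ => hconj s, Finset.sum_const, Finset.card_univ,
          nsmul_eq_mul, mul_div_right_comm, hcard]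

end Frobenius

section LittleGroup

variable {Q E : Type} [Group Q] [Group E] (φ : E →* MulAut Q) (θ : Q →* ℂ)

/-- The inertia group in `E` of the linear character `θ` of the normal subgroup `Q` of `Q ⋊ E`. -/
def inertiaSubgroup : Subgroup E where
  carrier := {e | ∀ q, θ (φ e q) = θ q}
  mul_mem' {a b} ha hb q := by rw [map_mul, MulAut.mul_apply, ha, hb]
  one_mem' q := by rw [map_one, MulAut.one_apply]
  inv_mem' {a} ha q := by rw [← ha, map_inv, MulAut.apply_inv_self]

/-- The character `θ × λ` of the inertia group `Q ⋊ D` of `θ` in `Q ⋊ E`, where `D` is the inertia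
group of `θ` in `E` and `λ` is a character of `D`. -/
def inertiaProd (lam : inertiaSubgroup φ θ → ℂ) :
    (inertiaSubgroup φ θ).comap (SemidirectProduct.rightHom : Q ⋊[φ] E →* E) → ℂ :=
  fun g => θ (g : Q ⋊[φ] E).left * lam ⟨SemidirectProduct.rightHom (g : Q ⋊[φ] E), g.2⟩

/-- The character of `D`, the inertia group of `θ` in `E`, on the `θ`-isotypic component of the
restriction to `Q` of a representation of `Q ⋊ E` with character `χ`, computed as a trace against
the projection `|Q|⁻¹ ∑ q, θ̄(q) q` onto that component. -/
def isotypicChar [Fintype Q] (χ : Q ⋊[φ] E → ℂ) : inertiaSubgroup φ θ → ℂ :=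
  fun d => (Fintype.card Q : ℂ)⁻¹ * ∑ q, (starRingEnd ℂ) (θ q) * χ ⟨q, d⟩

/-- The character of `Q ⋊ E` induced from `θ × λ`. -/
def mackeyChar [Fintype Q] [Fintype E] (lam : inertiaSubgroup φ θ → ℂ) : Q ⋊[φ] E → ℂ :=
  indChar _ (inertiaProd φ θ lam)

variable {φ θ}

lemma isChar_inertiaProd {lam : inertiaSubgroup φ θ → ℂ} (hlam : IsChar _ lam) :
    IsChar _ (inertiaProd φ θ lam) := by
  let f : (inertiaSubgroup φ θ).comap (SemidirectProduct.rightHom : Q ⋊[φ] E →* E) →* ℂ :=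
    { toFun := fun g => θ (g : Q ⋊[φ] E).left
      map_one' := map_one θ
      map_mul' := fun g h => (map_mul θ _ _).trans (congrArg _ (g.2 _)) }
  exact (hlam.comp_monoidHom (SemidirectProduct.rightHom.subgroupComap _)).linear_mul f

lemma map_left_conj_of_mem_inertiaSubgroup {s : Q ⋊[φ] E} {q : Q} {e : E}
    (h : s.right * e * s.right⁻¹ ∈ inertiaSubgroup φ θ) :
    θ (s * ⟨q, e⟩ * s⁻¹).left = θ (φ s.right q) := by
  have hleft : (s * ⟨q, e⟩ * s⁻¹).left =
      s.left * φ s.right q * φ (s.right * e * s.right⁻¹) s.left⁻¹ := by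
    simp [SemidirectProduct.mul_left, SemidirectProduct.inv_left]
  rw [hleft, map_mul, map_mul, h, mul_right_comm, ← map_mul, mul_inv_cancel, map_one, one_mul]

lemma conj_mem_inertiaSubgroup_iff {t : E} (ht : ∀ q, θ (φ t q) = (starRingEnd ℂ) (θ q)) {e : E} :
    t * e * t⁻¹ ∈ inertiaSubgroup φ θ ↔ e ∈ inertiaSubgroup φ θ := by
  refine (φ t).surjective.forall.trans (forall_congr' fun q => ?_)
  have happly : φ (t * e * t⁻¹) (φ t q) = φ t (φ e q) := by
    simp only [← MulAut.mul_apply, ← map_mul, inv_mul_cancel_right]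
  rw [happly, ht, ht, (starRingEnd ℂ).injective.eq_iff]

lemma conjChar_inertiaSubgroup_apply {t : E} (ht : ∀ q, θ (φ t q) = (starRingEnd ℂ) (θ q))
    (lam : inertiaSubgroup φ θ → ℂ) (d : inertiaSubgroup φ θ) :
    conjChar _ lam t d = lam ⟨t * d * t⁻¹, (conj_mem_inertiaSubgroup_iff ht).2 d.2⟩ :=
  dif_pos _

lemma isClassFunction_starChar_conjChar {t : E} (ht : ∀ q, θ (φ t q) = (starRingEnd ℂ) (θ q))
    {lam : inertiaSubgroup φ θ → ℂ} (hlam : IsClassFunction lam) :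
    IsClassFunction (starChar (conjChar _ lam t)) := by
  intro d x
  refine congrArg (fun z : ℂ => (starRingEnd ℂ) z) ?_
  rw [conjChar_inertiaSubgroup_apply ht, conjChar_inertiaSubgroup_apply ht,
    ← hlam ⟨t * d * t⁻¹, _⟩ ⟨t * x * t⁻¹, (conj_mem_inertiaSubgroup_iff ht).2 x.2⟩]
  refine congrArg lam (Subtype.ext ?_)
  simp only [Subgroup.coe_mul, Subgroup.coe_inv]
  group

/-- The full preimage of `D` in `Q ⋊ E`, as a set of pairs. -/
def comapRightHomEquiv (D : Subgroup E) :
    D.comap (SemidirectProduct.rightHom : Q ⋊[φ] E →* E) ≃ Q × D where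
  toFun g := (g.1.left, ⟨g.1.right, g.2⟩)
  invFun p := ⟨⟨p.1, p.2⟩, p.2.2⟩

lemma card_comap_rightHom (D : Subgroup E) :
    Nat.card (D.comap (SemidirectProduct.rightHom : Q ⋊[φ] E →* E)) = Nat.card Q * Nat.card D :=
  (Nat.card_congr (comapRightHomEquiv D)).trans (Nat.card_prod _ _)

variable [Fintype Q]

lemma isChar_isotypicChar {χ : Q ⋊[φ] E → ℂ} (hχ : IsChar (Q ⋊[φ] E) χ) :
    IsChar (inertiaSubgroup φ θ) (isotypicChar φ θ χ) := by
  obtain ⟨V, rfl⟩ := hχ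
  let ρ : Representation ℂ (inertiaSubgroup φ θ) V :=
    V.ρ.comp (SemidirectProduct.inr.comp (inertiaSubgroup φ θ).subtype)
  let σ : Representation ℂ Q V :=
    linearTwist ((starRingEnd ℂ : ℂ →* ℂ).comp θ) (V.ρ.comp SemidirectProduct.inl)
  have hσρ (d : inertiaSubgroup φ θ) (q : Q) :
      σ q * ρ d = (starRingEnd ℂ) (θ q) • V.ρ ⟨q, d⟩ := by
    rw [SemidirectProduct.mk_eq_inl_mul_inr, map_mul]
    exact smul_mul_assoc _ _ _
  have hρσ (d : inertiaSubgroup φ θ) (q : Q) : ρ d * σ q = σ (φ d q) * ρ d := by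
    have hmul : (SemidirectProduct.inr (d : E) * SemidirectProduct.inl q : Q ⋊[φ] E) =
        ⟨φ d q, d⟩ := by
      ext <;> simp
    rw [hσρ, d.2 q, ← hmul, map_mul]
    exact mul_smul_comm _ _ _
  have hcomm (d : inertiaSubgroup φ θ) : Commute (ρ d) (∑ q, σ q) := by
    rw [Commute, SemiconjBy, Finset.mul_sum, Finset.sum_mul]
    exact Fintype.sum_equiv (φ d).toEquiv _ _ fun q => hρσ d q
  have htrace (d : inertiaSubgroup φ θ) (q : Q) :
      LinearMap.trace ℂ V (ρ d * σ q) = (starRingEnd ℂ) (θ q) * V.character ⟨q, d⟩ := by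
    rw [LinearMap.trace_mul_comm ℂ (ρ d) (σ q), hσρ, map_smul, smul_eq_mul]
    rfl
  convert isChar_average ρ σ hcomm using 2 with d
  simp only [htrace, isotypicChar]

lemma isotypicChar_one (χ : Q ⋊[φ] E → ℂ) : isotypicChar φ θ χ 1 =
    (Fintype.card Q : ℂ)⁻¹ * ∑ q, (starRingEnd ℂ) (θ q) * χ (SemidirectProduct.inl q) :=
  rfl

lemma isotypicChar_ne_zero_iff {χ : Q ⋊[φ] E → ℂ} (hχ : IsChar (Q ⋊[φ] E) χ) :
    isotypicChar φ θ χ ≠ 0 ↔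
      ∑ q, (starRingEnd ℂ) (θ q) * χ (SemidirectProduct.inl q) ≠ 0 := by
  rw [Ne, ← (isChar_isotypicChar hχ).apply_one_eq_zero_iff, isotypicChar_one, mul_eq_zero,
    or_iff_right (inv_ne_zero (NeZero.ne _))]

lemma sum_starRingEnd_mul_apply (f : E) : ∑ q, (starRingEnd ℂ) (θ q) * θ (φ f q) =
    if f ∈ inertiaSubgroup φ θ then (Fintype.card Q : ℂ) else 0 :=
  (sum_starRingEnd_mul_eq_ite θ (θ.comp (φ f).toMonoidHom)).trans <|
    if_congr MonoidHom.ext_iff rfl rfl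

variable [Fintype E]

lemma isChar_mackeyChar {lam : inertiaSubgroup φ θ → ℂ} (hlam : IsChar _ lam) :
    IsChar (Q ⋊[φ] E) (mackeyChar φ θ lam) :=
  isChar_indChar (isChar_inertiaProd hlam)

lemma sum_semidirectProduct {M : Type*} [AddCommMonoid M] (F : Q ⋊[φ] E → M) :
    ∑ g, F g = ∑ q, ∑ e, F ⟨q, e⟩ := by
  rw [← Fintype.sum_prod_type' fun q e => F ⟨q, e⟩]
  exact Fintype.sum_equiv SemidirectProduct.equivProd _ _ fun _ => rfl

lemma sum_comap_rightHom {M : Type*} [AddCommMonoid M] (D : Subgroup E)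
    (F : D.comap (SemidirectProduct.rightHom : Q ⋊[φ] E →* E) → M) :
    ∑ g, F g = ∑ q, ∑ d : D, F ⟨⟨q, d⟩, d.2⟩ := by
  rw [← Fintype.sum_prod_type' fun q (d : D) => F ⟨⟨q, d⟩, d.2⟩]
  exact Fintype.sum_equiv (comapRightHomEquiv D) _ _ fun _ => rfl

lemma mackeyChar_apply (lam : inertiaSubgroup φ θ → ℂ) (q : Q) (e : E) :
    mackeyChar φ θ lam ⟨q, e⟩ = (Nat.card (inertiaSubgroup φ θ) : ℂ)⁻¹ *
      ∑ f : E, if h : f * e * f⁻¹ ∈ inertiaSubgroup φ θ then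
        θ (φ f q) * lam ⟨f * e * f⁻¹, h⟩ else 0 := by
  have hterm (a : Q) (f : E) : (if h : (⟨a, f⟩ * ⟨q, e⟩ * ⟨a, f⟩⁻¹ : Q ⋊[φ] E) ∈
        (inertiaSubgroup φ θ).comap SemidirectProduct.rightHom
      then inertiaProd φ θ lam ⟨_, h⟩ else 0) =
      if h : f * e * f⁻¹ ∈ inertiaSubgroup φ θ then
        θ (φ f q) * lam ⟨f * e * f⁻¹, h⟩ else 0 := by
    refine dite_congr rfl (fun h => ?_) fun _ => rfl
    exact congrArg (· * _) (map_left_conj_of_mem_inertiaSubgroup (s := ⟨a, f⟩) h)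
  rw [mackeyChar, indChar, sum_semidirectProduct]
  simp only [hterm]
  rw [Finset.sum_const, Finset.card_univ, nsmul_eq_mul, card_comap_rightHom, Nat.cast_mul,
    Nat.card_eq_fintype_card (α := Q), mul_div_mul_left _ _ (NeZero.ne _), div_eq_inv_mul]

lemma mackeyChar_one (lam : inertiaSubgroup φ θ → ℂ) :
    mackeyChar φ θ lam 1 = (inertiaSubgroup φ θ).index * lam 1 := by
  have hterm (f : E) : (if h : f * 1 * f⁻¹ ∈ inertiaSubgroup φ θ then
      θ (φ f 1) * lam ⟨f * 1 * f⁻¹, h⟩ else 0) = lam 1 := by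
    have hf : f * 1 * f⁻¹ = 1 := by group
    simp only [hf, map_one, one_mul, one_mem, dif_pos]
    rfl
  refine (mackeyChar_apply lam 1 1).trans ?_
  simp only [hterm]
  rw [Finset.sum_const, Finset.card_univ, nsmul_eq_mul, ← Nat.card_eq_fintype_card,
    ← (inertiaSubgroup φ θ).index_mul_card, Nat.cast_mul, mul_comm (Subgroup.index _ : ℂ),
    mul_assoc, inv_mul_cancel_left₀ (NeZero.ne _)]

lemma isotypicChar_mackeyChar {lam : inertiaSubgroup φ θ → ℂ} (hlam : IsClassFunction lam) :
    isotypicChar φ θ (mackeyChar φ θ lam) = lam := by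
  ext d
  have hterm (f : E) : ∑ q, (starRingEnd ℂ) (θ q) *
      (if h : f * d * f⁻¹ ∈ inertiaSubgroup φ θ then θ (φ f q) * lam ⟨f * d * f⁻¹, h⟩ else 0) =
      if f ∈ inertiaSubgroup φ θ then Fintype.card Q * lam d else 0 := by
    split_ifs with hd hf hf
    · have hconj : lam ⟨f * d * f⁻¹, hd⟩ = lam d := hlam d ⟨f, hf⟩
      simp only [hconj, ← mul_assoc]
      rw [← Finset.sum_mul, sum_starRingEnd_mul_apply, if_pos hf]
    · simp only [← mul_assoc]
      rw [← Finset.sum_mul, sum_starRingEnd_mul_apply, if_neg hf, zero_mul]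
    · exact absurd (mul_mem (mul_mem hf d.2) (inv_mem hf)) hd
    · simp only [mul_zero, Finset.sum_const_zero]
  have hcount : ∑ f : E, (if f ∈ inertiaSubgroup φ θ then Fintype.card Q * lam d else 0) =
      Nat.card (inertiaSubgroup φ θ) * (Fintype.card Q * lam d) := by
    refine (sum_dite_mem_subgroup _ fun _ => Fintype.card Q * lam d).trans ?_
    rw [Finset.sum_const, Finset.card_univ, nsmul_eq_mul, Nat.card_eq_fintype_card]
  simp only [isotypicChar, mackeyChar_apply, mul_left_comm ((starRingEnd ℂ) _)]
  rw [← Finset.mul_sum]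
  simp only [Finset.mul_sum _ _ ((starRingEnd ℂ) _)]
  rw [Finset.sum_comm]
  simp only [hterm]
  rw [hcount, inv_mul_cancel_left₀ (NeZero.ne _), inv_mul_cancel_left₀ (NeZero.ne _)]

lemma sum_mackeyChar_mul_inv (lam : inertiaSubgroup φ θ → ℂ) {χ : Q ⋊[φ] E → ℂ}
    (hχ : IsClassFunction χ) :
    ∑ g, mackeyChar φ θ lam g * χ g⁻¹ = (inertiaSubgroup φ θ).index * Fintype.card Q *
      ∑ d, lam d * isotypicChar φ θ χ d⁻¹ := by
  have hinner (d : inertiaSubgroup φ θ) : ∑ q, θ q * χ (⟨q, d⟩ : Q ⋊[φ] E)⁻¹ =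
      Fintype.card Q * isotypicChar φ θ χ d⁻¹ := by
    rw [isotypicChar, mul_inv_cancel_left₀ (NeZero.ne _)]
    refine Fintype.sum_equiv ((Equiv.inv Q).trans (φ (d : E)⁻¹).toEquiv) _ _ fun q => ?_
    have : (starRingEnd ℂ) (θ (φ (d : E)⁻¹ q⁻¹)) = θ q := by
      rw [(inv_mem d.2) q⁻¹, starRingEnd_apply_eq_apply_inv, inv_inv]
    exact congrArg (· * _) this.symm
  rw [mackeyChar, sum_indChar_mul_inv _ _ hχ, Subgroup.index_comap_of_surjective _
    SemidirectProduct.rightHom_surjective, sum_comap_rightHom, Finset.sum_comm, mul_assoc,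
    Finset.mul_sum _ _ (Fintype.card Q : ℂ)]
  congr 1
  refine Finset.sum_congr rfl fun d _ => ?_
  rw [mul_left_comm, ← hinner, Finset.mul_sum]
  refine Finset.sum_congr rfl fun q _ => ?_
  rw [← mul_assoc, mul_comm (lam d)]
  rfl

lemma isIrrChar_mackeyChar {lam : inertiaSubgroup φ θ → ℂ} (hlam : IsIrrChar _ lam) :
    IsIrrChar (Q ⋊[φ] E) (mackeyChar φ θ lam) := by
  have hχ := isChar_mackeyChar hlam.isChar
  rw [isIrrChar_iff hχ, sum_mackeyChar_mul_inv _ hχ.isClassFunction,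
    isotypicChar_mackeyChar hlam.isChar.isClassFunction, (isIrrChar_iff hlam.isChar).1 hlam,
    SemidirectProduct.card, ← (inertiaSubgroup φ θ).index_mul_card, Nat.card_eq_fintype_card,
    Nat.card_eq_fintype_card (α := Q)]
  push_cast
  ring

lemma bijOn_mackeyChar : Set.BijOn (mackeyChar φ θ) {lam | IsIrrChar (inertiaSubgroup φ θ) lam}
    {χ | IsIrrChar (Q ⋊[φ] E) χ ∧
      ∑ q, (starRingEnd ℂ) (θ q) * χ (SemidirectProduct.inl q) ≠ 0} := by
  have hinv : Set.LeftInvOn (isotypicChar φ θ) (mackeyChar φ θ)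
      {lam | IsIrrChar (inertiaSubgroup φ θ) lam} :=
    fun lam hlam => isotypicChar_mackeyChar hlam.isChar.isClassFunction
  refine ⟨fun lam hlam => ⟨isIrrChar_mackeyChar hlam, ?_⟩, hinv.injOn, ?_⟩
  · rw [← isotypicChar_ne_zero_iff (isChar_mackeyChar hlam.isChar), hinv hlam]
    exact hlam.ne_zero
  · rintro χ ⟨hχ, hχ0⟩
    obtain ⟨μ, hμ, hsum⟩ := (isChar_isotypicChar hχ.isChar).exists_isIrrChar_sum_ne_zero
      ((isotypicChar_ne_zero_iff hχ.isChar).2 hχ0)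
    have hswap : ∑ d, μ d * isotypicChar φ θ χ d⁻¹ = ∑ d, isotypicChar φ θ χ d * μ d⁻¹ :=
      Fintype.sum_equiv (Equiv.inv _) _ _ fun d => by rw [Equiv.inv_apply, inv_inv, mul_comm]
    refine ⟨μ, hμ, (isIrrChar_mackeyChar hμ).eq_of_sum_ne_zero hχ ?_⟩
    rw [sum_mackeyChar_mul_inv _ hχ.isChar.isClassFunction, hswap]
    exact mul_ne_zero (mul_ne_zero (Nat.cast_ne_zero.2 Subgroup.index_ne_zero_of_finite)
      (NeZero.ne _)) hsum

lemma starChar_mackeyChar {t : E} (ht : ∀ q, θ (φ t q) = (starRingEnd ℂ) (θ q))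
    (lam : inertiaSubgroup φ θ → ℂ) :
    starChar (mackeyChar φ θ lam) = mackeyChar φ θ (starChar (conjChar _ lam t)) := by
  ext ⟨q, e⟩
  rw [starChar, mackeyChar_apply, mackeyChar_apply, map_mul, map_inv₀, map_natCast, map_sum]
  congr 1
  refine (Fintype.sum_equiv (Equiv.mulLeft t) _ _ fun f => ?_).symm
  have hconj : t * f * e * (t * f)⁻¹ = t * (f * e * f⁻¹) * t⁻¹ := by group
  have hθ : (starRingEnd ℂ) (θ (φ (t * f) q)) = θ (φ f q) := by
    rw [map_mul, MulAut.mul_apply, ht, Complex.conj_conj]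
  simp only [Equiv.coe_mulLeft, hconj, conj_mem_inertiaSubgroup_iff ht]
  split_ifs with hf
  · rw [map_mul, hθ, starChar, conjChar_inertiaSubgroup_apply ht]
  · rw [map_zero]

lemma starChar_mackeyChar_eq_self_iff {t : E} (ht : ∀ q, θ (φ t q) = (starRingEnd ℂ) (θ q))
    {lam : inertiaSubgroup φ θ → ℂ} (hlam : IsClassFunction lam) :
    starChar (mackeyChar φ θ lam) = mackeyChar φ θ lam ↔ conjChar _ lam t = starChar lam := by
  rw [starChar_mackeyChar ht, ← starChar_involutive.eq_iff]
  refine ⟨fun h => ?_, congrArg _⟩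
  rw [← isotypicChar_mackeyChar (isClassFunction_starChar_conjChar ht hlam), h,
    isotypicChar_mackeyChar hlam]

end LittleGroup

section Inversion

variable {Q E : Type} [Group Q] [Group E] {φ : E →* MulAut Q} {D : Subgroup E}

lemma isMulCommutative_of_forall_eq_inv (f : MulAut Q) (hf : ∀ q, f q = q⁻¹) :
    IsMulCommutative Q := by
  refine ⟨⟨fun a b => inv_injective ?_⟩⟩
  rw [← hf, map_mul, hf, hf, mul_inv_rev]

lemma starChar_ne_self_of_odd_card [Fintype Q] [IsMulCommutative Q] (hQ : Odd (Fintype.card Q))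
    {θ : Q → ℂ} (hθ : IsIrrChar Q θ) (hθ1 : θ ≠ fun _ => 1) : starChar θ ≠ θ := by
  obtain ⟨θ, rfl⟩ := hθ.exists_monoidHom
  refine fun hstar => hθ1 (funext fun q => ?_)
  obtain ⟨r, rfl⟩ : ∃ r, r ^ 2 = q :=
    ((Nat.card_eq_fintype_card (α := Q) ▸ hQ).coprime_two_right.pow_left_bijective).2 q
  have hr : θ r⁻¹ = θ r := (starRingEnd_apply_eq_apply_inv θ r).symm.trans (congrFun hstar r)
  rw [sq, map_mul, ← congrArg (· * θ r) hr, ← map_mul, inv_mul_cancel, map_one]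

lemma inertiaSubgroup_eq [Finite Q] {θ : Q →* ℂ} (hφD : ∀ d ∈ D, φ d = 1)
    (hφinv : ∀ e ∉ D, ∀ q, φ e q = q⁻¹) (hθ : starChar θ ≠ θ) : inertiaSubgroup φ θ = D := by
  ext e
  refine ⟨fun he => by_contra fun heD => hθ (funext fun q => ?_), fun he q => ?_⟩
  · rw [starChar, starRingEnd_apply_eq_apply_inv, ← hφinv e heD, he]
  · rw [hφD e he, MulAut.one_apply]

lemma eq_or_eq_inv_of_card_eq_three (hQ : Nat.card Q = 3) {q r : Q} (hq : q ≠ 1) (hr : r ≠ 1) :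
    r = q ∨ r = q⁻¹ := by
  have hq3 : q ^ 3 = 1 := hQ ▸ pow_card_eq_one'
  obtain ⟨n, rfl⟩ : ∃ n : ℕ, q ^ n = r := mem_powers_of_prime_card hQ hq
  rw [pow_eq_pow_mod n hq3] at hr ⊢
  have hlt : n % 3 < 3 := Nat.mod_lt _ three_pos
  interval_cases n % 3
  · exact absurd (pow_zero q) hr
  · exact .inl (pow_one q)
  · exact .inr (eq_inv_of_mul_eq_one_left (by rw [← pow_succ, hq3]))

lemma sum_starRingEnd_mul_eq_sub [Fintype Q] {θ : Q →* ℂ} (hθ : θ ≠ 1) {f : Q → ℂ} {c : ℂ}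
    (hf : ∀ q ≠ 1, f q = c) : ∑ q, (starRingEnd ℂ) (θ q) * f q = f 1 - c := by
  have hc : ∑ q, (starRingEnd ℂ) (θ q) * c = 0 := by
    have := sum_starRingEnd_mul_eq_ite θ 1
    simp only [if_neg hθ.symm, MonoidHom.one_apply, mul_one] at this
    rw [← Finset.sum_mul, this, zero_mul]
  rw [← sub_zero (∑ q, _), ← hc, ← Finset.sum_sub_distrib,
    Fintype.sum_eq_single 1 fun q hq => by rw [hf q hq, sub_self], map_one, map_one, one_mul,
    one_mul]

lemma sum_starRingEnd_mul_inl_ne_zero_iff [Fintype Q] [IsMulCommutative Q]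
    (hQ : Fintype.card Q = 3) {e : E} (he : ∀ q, φ e q = q⁻¹) {θ : Q → ℂ} (hθ : IsIrrChar Q θ)
    (hθ1 : θ ≠ fun _ => 1) {χ : Q ⋊[φ] E → ℂ} (hχ : IsClassFunction χ) :
    ∑ q, (starRingEnd ℂ) (θ q) * χ (SemidirectProduct.inl q) ≠ 0 ↔
      ∃ q, χ (SemidirectProduct.inl q) ≠ χ 1 := by
  obtain ⟨θ, rfl⟩ := hθ.exists_monoidHom
  have hθ1' : θ ≠ 1 := fun h => hθ1 (congrArg _ h)
  have hinv (q : Q) : χ (SemidirectProduct.inl q⁻¹) = χ (SemidirectProduct.inl q) := by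
    rw [← he, SemidirectProduct.inl_aut, map_inv, hχ]
  have hconst {q r : Q} (hq : q ≠ 1) (hr : r ≠ 1) :
      χ (SemidirectProduct.inl r) = χ (SemidirectProduct.inl q) := by
    rw [← Nat.card_eq_fintype_card] at hQ
    obtain rfl | rfl := eq_or_eq_inv_of_card_eq_three hQ hq hr
    exacts [rfl, hinv q]
  have hsum {q : Q} (hq : q ≠ 1) : ∑ r, (starRingEnd ℂ) (θ r) * χ (SemidirectProduct.inl r) =
      χ 1 - χ (SemidirectProduct.inl q) :=
    sum_starRingEnd_mul_eq_sub (f := fun r => χ (SemidirectProduct.inl r)) hθ1'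
      fun r hr => hconst hq hr
  constructor
  · have : Nontrivial Q := Fintype.one_lt_card_iff_nontrivial.1 (by rw [hQ]; norm_num)
    obtain ⟨q, hq⟩ := exists_ne (1 : Q)
    rw [hsum hq, sub_ne_zero]
    exact fun h => ⟨q, h.symm⟩
  · rintro ⟨q, hq⟩
    have hq1 : q ≠ 1 := fun h => hq (congrArg χ (h ▸ map_one _))
    rw [hsum hq1, sub_ne_zero]
    exact hq.symm

lemma exists_notMem_of_index_eq_two (hD : D.index = 2) : ∃ e, e ∉ D := by
  by_contra! h
  rw [D.eq_top_iff'.2 h, Subgroup.index_top] at hD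
  omega

end Inversion

theorem stmt12_general {Q E : Type} [Group Q] [Group E] [Fintype Q] [Fintype E]
    (D : Subgroup E) (hD : D.index = 2)
    (φ : E →* MulAut Q) (hφD : ∀ d : E, d ∈ D → φ d = 1)
    (hφinv : ∀ e : E, e ∉ D → ∀ q : Q, φ e q = q⁻¹)
    (θ : Q → ℂ) (hθ : IsIrrChar Q θ) (hθ_star : starChar θ ≠ θ)
    (chi : (↥D → ℂ) → (Q ⋊[φ] E) → ℂ)
    (hchi : ∀ lam : ↥D → ℂ,
      chi lam = indChar (Subgroup.comap (SemidirectProduct.rightHom : Q ⋊[φ] E →* E) D)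
        (fun g => θ (g : Q ⋊[φ] E).left *
          lam ⟨SemidirectProduct.rightHom (g : Q ⋊[φ] E), g.2⟩)) :
    (∀ lam : ↥D → ℂ, IsIrrChar ↥D lam →
      IsIrrChar (Q ⋊[φ] E) (chi lam) ∧ chi lam 1 = 2 * lam 1) ∧
    Set.BijOn chi {lam | IsIrrChar ↥D lam}
      {χ : (Q ⋊[φ] E) → ℂ | IsIrrChar (Q ⋊[φ] E) χ ∧
        ∑ q, (starRingEnd ℂ) (θ q) * χ (SemidirectProduct.inl q) ≠ 0} ∧
    (∀ lam : ↥D → ℂ, IsIrrChar ↥D lam →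
      ((∀ g, (starRingEnd ℂ) (chi lam g) = chi lam g) ↔
        ∃ t : E, t ∉ D ∧ conjChar D lam t = starChar lam) ∧
      ((∀ g, (starRingEnd ℂ) (chi lam g) = chi lam g) ↔
        ∀ t : E, t ∉ D → conjChar D lam t = starChar lam)) := by
  obtain ⟨e, he⟩ := exists_notMem_of_index_eq_two hD
  have := isMulCommutative_of_forall_eq_inv (φ e) (hφinv e he)
  obtain ⟨θ, rfl⟩ := hθ.exists_monoidHom
  obtain rfl := inertiaSubgroup_eq hφD hφinv hθ_star
  obtain rfl : chi = mackeyChar φ θ := funext hchi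
  have hreal {lam} (hlam : IsIrrChar (inertiaSubgroup φ θ) lam) {t : E}
      (ht : t ∉ inertiaSubgroup φ θ) :
      (∀ g, (starRingEnd ℂ) (mackeyChar φ θ lam g) = mackeyChar φ θ lam g) ↔
        conjChar _ lam t = starChar lam := by
    rw [← starChar_mackeyChar_eq_self_iff (fun q => ?_) hlam.isChar.isClassFunction]
    · exact funext_iff.symm
    · rw [hφinv t ht, starRingEnd_apply_eq_apply_inv]
  refine ⟨fun lam hlam => ⟨isIrrChar_mackeyChar hlam, ?_⟩, ?_, fun lam hlam => ⟨?_, ?_⟩⟩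
  · rw [mackeyChar_one, hD, Nat.cast_two]
  · exact bijOn_mackeyChar
  · exact ⟨fun h => ⟨e, he, (hreal hlam he).1 h⟩, fun ⟨_, ht, h⟩ => (hreal hlam ht).2 h⟩
  · exact ⟨fun h _ ht => (hreal hlam ht).1 h, fun h => (hreal hlam he).2 (h e he)⟩

/-- Let `E` be a finite 2-group, `D ≤ E` of index 2, `Q` cyclic of order 3 and
`G = Q ⋊ E` where `D` centralizes `Q` and `E∖D` inverts `Q`. Fix a nontrivial `θ ∈ Irr(Q)` and for
`λ ∈ Irr(D)` let `χ_λ = (θ × λ)^G`, induced from the subgroup `Q ⋊ D = Q × D`. Then: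
(1) each `χ_λ` is irreducible of degree `2·λ(1)`;
(2) `λ ↦ χ_λ` is a bijection from `Irr(D)` onto the irreducible characters of `G` whose kernel
does not contain `Q`; and
(3) `χ_λ` is real-valued iff `λ^t = λ̄` for some (equivalently, every) `t ∈ E∖D`. -/
theorem stmt12 {Q E : Type} [Group Q] [Group E] [Fintype Q] [Fintype E]
    (hQcyc : IsCyclic Q) (hQ3 : Fintype.card Q = 3) (hE2 : IsPGroup 2 E)
    (D : Subgroup E) (hD : D.index = 2)
    (φ : E →* MulAut Q) (hφD : ∀ d : E, d ∈ D → φ d = 1)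
    (hφinv : ∀ e : E, e ∉ D → ∀ q : Q, φ e q = q⁻¹)
    (θ : Q → ℂ) (hθ : IsIrrChar Q θ) (hθ1 : θ ≠ fun _ => 1)
    (chi : (↥D → ℂ) → (Q ⋊[φ] E) → ℂ)
    (hchi : ∀ lam : ↥D → ℂ,
      chi lam = indChar (Subgroup.comap (SemidirectProduct.rightHom : Q ⋊[φ] E →* E) D)
        (fun g => θ (g : Q ⋊[φ] E).left *
          lam ⟨SemidirectProduct.rightHom (g : Q ⋊[φ] E), g.2⟩)) :
    (∀ lam : ↥D → ℂ, IsIrrChar ↥D lam →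
      IsIrrChar (Q ⋊[φ] E) (chi lam) ∧ chi lam 1 = 2 * lam 1) ∧
    Set.BijOn chi {lam | IsIrrChar ↥D lam}
      {χ : (Q ⋊[φ] E) → ℂ | IsIrrChar (Q ⋊[φ] E) χ ∧
        ∃ q : Q, χ (SemidirectProduct.inl q) ≠ χ 1} ∧
    (∀ lam : ↥D → ℂ, IsIrrChar ↥D lam →
      ((∀ g, (starRingEnd ℂ) (chi lam g) = chi lam g) ↔
        ∃ t : E, t ∉ D ∧ conjChar D lam t = starChar lam) ∧
      ((∀ g, (starRingEnd ℂ) (chi lam g) = chi lam g) ↔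
        ∀ t : E, t ∉ D → conjChar D lam t = starChar lam)) := by
  obtain ⟨e, he⟩ := exists_notMem_of_index_eq_two hD
  have := isMulCommutative_of_forall_eq_inv (φ e) (hφinv e he)
  have hker (χ) (hχ : IsIrrChar (Q ⋊[φ] E) χ) :=
    sum_starRingEnd_mul_inl_ne_zero_iff hQ3 (hφinv e he) hθ hθ1 hχ.isChar.isClassFunction
  simpa only [and_congr_right (hker _)] using stmt12_general D hD φ hφD hφinv θ hθ
    (starChar_ne_self_of_odd_card (hQ3 ▸ by decide) hθ hθ1) chi hchi
end
end
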